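/- If (F,ρ) is a complete CAT(0) metric space and (M,μ) a finite measure space, then L²(M,F) with the distance d₂(f,g) = (∫_M ρ(f,g)² dμ)^{1/2} satisfies the CAT(0) comparison inequality; in particular the space of measurable maps into positive definite Hermitian matrices with finite L² distance to a smooth reference metric is CAT(0). -/

import Mathlib

open MeasureTheory

/-- Existence of a maximal `δ`-separated net. -/
lemma aux_net {F : Type*} [MetricSpace F] (δ : ℝ) (hδ : 0 < δ) :
    ∃ N : Set F, (∀ i ∈ N, ∀ j ∈ N, i ≠ j → δ ≤ dist i j) ∧ ∀ p, ∃ i ∈ N, dist p i < δ := by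
  obtain ⟨N, hN⟩ := zorn_subset {N : Set F | ∀ i ∈ N, ∀ j ∈ N, i ≠ j → δ ≤ dist i j} (by
    intro c hc hchain
    refine ⟨⋃₀ c, ?_, fun s hs => Set.subset_sUnion_of_mem hs⟩
    rintro i ⟨s, hs, his⟩ j ⟨t, ht, hjt⟩ hij
    rcases hchain.total hs ht with h | h
    · exact hc ht i (h his) j hjt hij
    · exact hc hs i his j (h hjt) hij)
  refine ⟨N, hN.prop, fun p => ?_⟩
  by_contra! hcon
  have hmem : insert p N ∈ {N : Set F | ∀ i ∈ N, ∀ j ∈ N, i ≠ j → δ ≤ dist i j} := by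
    rintro i (rfl | hi) j (rfl | hj) hij
    · exact absurd rfl hij
    · exact hcon j hj
    · rw [dist_comm]; exact hcon i hi
    · exact hN.prop i hi j hj hij
  have hp : p ∈ N := hN.le_of_ge hmem (Set.subset_insert p N) (Set.mem_insert p N)
  have := hcon p hp
  rw [dist_self] at this
  linarith

/-- A measurable retraction onto a net. -/
lemma aux_proj {F : Type*} [MetricSpace F] [MeasurableSpace F] [BorelSpace F]
    (δ : ℝ) (N : Set F) (hN : ∀ p, ∃ i ∈ N, dist p i < δ) :
    ∃ π : F → F, Measurable π ∧ (∀ p, π p ∈ N) ∧ ∀ p, dist p (π p) < δ := by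
  have wf : WellFounded (WellOrderingRel : F → F → Prop) := IsWellFounded.wf
  let S : F → Set F := fun p => {i | i ∈ N ∧ dist p i < δ}
  have hS : ∀ p, (S p).Nonempty := fun p => by
    obtain ⟨i, hi, h⟩ := hN p
    exact ⟨i, hi, h⟩
  let π : F → F := fun p => wf.min (S p) (hS p)
  have hmem : ∀ p, π p ∈ S p := fun p => wf.min_mem _ _
  have hmin : ∀ p i, i ∈ S p → ¬ WellOrderingRel i (π p) := fun p i hi =>
    wf.not_lt_min _ hi
  have huniq : ∀ p q, π q ∈ S p → π p ∈ S q → π p = π q := by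
    intro p q h1 h2
    rcases trichotomous_of WellOrderingRel (π p) (π q) with h | h | h
    · exact absurd h (hmin q _ h2)
    · exact h
    · exact absurd h (hmin p _ h1)
  let A : ℕ → Set F → Set F := fun n T =>
    {p | π p ∈ T ∧ Metric.ball p (1 / ((n : ℝ) + 1)) ⊆ Metric.ball (π p) δ}
  -- nearby points of `A n T` have the same image
  have hconst : ∀ n T p q, p ∈ A n T → q ∈ A n T → dist p q < 1 / ((n : ℝ) + 1) → π p = π q := by
    intro n T p q hp hq hpq
    apply huniq
    · exact ⟨(hmem q).1, hq.2 hpq⟩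
    · exact ⟨(hmem p).1, hp.2 (by rw [Metric.mem_ball, dist_comm]; exact hpq)⟩
  have hclosed : ∀ n T, IsClosed (A n T) := by
    intro n T
    rw [← closure_subset_iff_isClosed]
    intro p hp
    have hn : (0 : ℝ) < 1 / ((n : ℝ) + 1) := by positivity
    obtain ⟨q, hq, hpq⟩ := Metric.mem_closure_iff.1 hp _ (half_pos hn)
    -- all points of `A n T` close to `p` have image `π q`
    have hnear : ∀ y ∈ A n T, dist p y < 1 / ((n : ℝ) + 1) / 2 → π y = π q := by
      intro y hy hpy
      apply hconst n T y q hy hq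
      have := dist_triangle_left y q p
      linarith
    have hball : Metric.ball p (1 / ((n : ℝ) + 1)) ⊆ Metric.ball (π q) δ := by
      intro z hz
      rw [Metric.mem_ball] at hz
      obtain ⟨y, hy, hpy⟩ := Metric.mem_closure_iff.1 hp
        (min (1 / ((n : ℝ) + 1) / 2) (1 / ((n : ℝ) + 1) - dist z p))
        (lt_min (half_pos hn) (by linarith))
      rw [← hnear y hy (hpy.trans_le (min_le_left _ _))]
      apply hy.2
      rw [Metric.mem_ball]
      have h1 := hpy.trans_le (min_le_right _ _)
      have := dist_triangle z p y
      linarith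
    have hpi : π p = π q := by
      have hqp : π q ∈ S p := ⟨(hmem q).1, hball (Metric.mem_ball_self hn)⟩
      obtain ⟨y, hy, hpy⟩ := Metric.mem_closure_iff.1 hp
        (min (1 / ((n : ℝ) + 1) / 2) (δ - dist p (π p)))
        (lt_min (half_pos hn) (by linarith [(hmem p).2]))
      have hyq := hnear y hy (hpy.trans_le (min_le_left _ _))
      rw [← hyq] at hqp ⊢
      apply huniq _ _ hqp
      refine ⟨(hmem p).1, ?_⟩
      have h1 := hpy.trans_le (min_le_right _ _)
      have := dist_triangle_left y (π p) p
      linarith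
    refine ⟨?_, ?_⟩
    · rw [hpi]; exact hq.1
    · rw [hpi]; exact hball
  refine ⟨π, ?_, fun p => (hmem p).1, fun p => (hmem p).2⟩
  intro T _
  have : π ⁻¹' T = ⋃ n, A n T := by
    ext p
    simp only [Set.mem_preimage, Set.mem_iUnion]
    constructor
    · intro hp
      have hlt := (hmem p).2
      obtain ⟨n, hn⟩ := exists_nat_one_div_lt (sub_pos.2 hlt)
      refine ⟨n, hp, fun z hz => ?_⟩
      rw [Metric.mem_ball] at hz ⊢
      have := dist_triangle z p (π p)
      linarith
    · rintro ⟨n, hn⟩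
      exact hn.1
  rw [this]
  exact MeasurableSet.iUnion fun n => (hclosed n T).measurableSet

/-- The point at parameter `2^{-n}` on the geodesic from `p` to `q`. -/
def auxGam {F : Type*} (mid : F → F → F) : ℕ → F → F → F
  | 0, _, q => q
  | n + 1, p, q => mid p (auxGam mid n p q)

/-- A product-measurable midpoint map forces the distance to be product-measurable. -/
lemma aux_dist {F : Type*} [MetricSpace F] [MeasurableSpace F] [BorelSpace F]
    (mid : F → F → F) (hm : Measurable (Function.uncurry mid))
    (hd : ∀ p q, dist p (mid p q) = dist p q / 2) :
    Measurable (fun z : F × F => dist z.1 z.2) := by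
  have hgd : ∀ n p q, dist p (auxGam mid n p q) = dist p q / 2 ^ n := by
    intro n p q
    induction n with
    | zero => simp [auxGam]
    | succ n ih => rw [auxGam, hd, ih, pow_succ]; field_simp
  have hstep : ∀ δ : ℝ, 0 < δ → ∃ π : F → F, (∀ p, dist p (π p) < δ) ∧
      Measurable (fun z : F × F => dist (π z.1) z.2) := by
    intro δ hδ
    obtain ⟨N, hsep, hcov⟩ := aux_net (F := F) δ hδ
    obtain ⟨π, hπ, hπN, hπd⟩ := aux_proj δ N hcov
    refine ⟨π, hπd, ?_⟩
    have hgm : ∀ n, Measurable (fun z : F × F => auxGam mid n (π z.1) z.2) := by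
      intro n
      induction n with
      | zero => exact measurable_snd
      | succ n ih => exact hm.comp ((hπ.comp measurable_fst).prodMk ih)
    have hfm : ∀ n : ℕ, Measurable (fun z : F × F =>
        2 ^ n * Metric.infDist (auxGam mid n (π z.1) z.2) N) := fun n =>
      ((Metric.continuous_infDist_pt N).measurable.comp (hgm n)).const_mul _
    refine measurable_of_tendsto_metrizable hfm ?_
    rw [tendsto_pi_nhds]
    rintro ⟨p, q⟩
    have hlim : Filter.Tendsto (fun n : ℕ => dist (π p) q / 2 ^ n) Filter.atTop (nhds 0) :=
      tendsto_const_nhds.div_atTop (tendsto_pow_atTop_atTop_of_one_lt one_lt_two)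
    refine tendsto_const_nhds.congr' ?_
    filter_upwards [hlim.eventually (gt_mem_nhds (half_pos hδ))] with n hn
    have hz := hgd n (π p) q
    set z := auxGam mid n (π p) q
    have hinf : Metric.infDist z N = dist (π p) z := by
      apply le_antisymm
      · rw [dist_comm]; exact Metric.infDist_le_dist_of_mem (hπN p)
      · rw [Metric.le_infDist ⟨_, hπN p⟩]
        intro j hj
        by_cases h : π p = j
        · rw [← h, dist_comm]
        · have h1 := hsep _ (hπN p) _ hj h
          have h2 := dist_triangle (π p) z j
          linarith
    change dist (π p) q = 2 ^ n * Metric.infDist z N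
    rw [hinf, hz]
    field_simp
  choose π hπd hπm using fun n : ℕ => hstep (1 / ((n : ℝ) + 1)) (by positivity)
  refine measurable_of_tendsto_metrizable
    (f := fun (n : ℕ) (z : F × F) => dist (π n z.1) z.2)
    (fun n => hπm n) ?_
  rw [tendsto_pi_nhds]
  rintro ⟨p, q⟩
  have h0 : Filter.Tendsto (fun n : ℕ => π n p) Filter.atTop (nhds p) := by
    rw [tendsto_iff_dist_tendsto_zero]
    refine squeeze_zero (fun _ => dist_nonneg) (fun n => ?_)
      (tendsto_one_div_add_atTop_nhds_zero_nat (𝕜 := ℝ))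
    rw [dist_comm]
    exact (hπd n p).le
  exact h0.dist tendsto_const_nhds

/-- The midpoint map really produces midpoints. -/
lemma aux_mid {F : Type*} [MetricSpace F] (mid : F → F → F)
    (hCN : ∀ x p q : F,
      edist x (mid p q) ^ 2 + edist p q ^ 2 / 4 ≤
        edist x p ^ 2 / 2 + edist x q ^ 2 / 2) (p q : F) :
    dist p (mid p q) = dist p q / 2 := by
  have key : ∀ x, dist x (mid p q) ^ 2 + dist p q ^ 2 / 4 ≤
      dist x p ^ 2 / 2 + dist x q ^ 2 / 2 := by
    intro x
    have h := ENNReal.toReal_mono (by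
      simp [ENNReal.add_eq_top, ENNReal.div_eq_top, edist_ne_top]) (hCN x p q)
    rw [ENNReal.toReal_add (by simp [edist_ne_top])
        (by simp [ENNReal.div_eq_top, edist_ne_top]),
      ENNReal.toReal_add (by simp [ENNReal.div_eq_top, edist_ne_top])
        (by simp [ENNReal.div_eq_top, edist_ne_top])] at h
    simpa [ENNReal.toReal_div, ENNReal.toReal_pow, ← dist_edist] using h
  have h1 := key p
  have h2 := key q
  rw [dist_self] at h1 h2
  rw [dist_comm q p] at h2
  have h3 := dist_triangle_right p q (mid p q)
  have h4 : dist p (mid p q) ≤ dist p q / 2 := by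
    refine le_of_not_gt fun hlt => ?_
    nlinarith [dist_nonneg (x := p) (y := q)]
  have h5 : dist q (mid p q) ≤ dist p q / 2 := by
    refine le_of_not_gt fun hlt => ?_
    nlinarith [dist_nonneg (x := p) (y := q)]
  linarith

/-- If `(F,ρ)` is a complete CAT(0) metric space — expressed through the CN midpoint
comparison inequality: there is a (measurable) midpoint map `mid` with
`ρ(x, mid p q)² + ρ(p,q)²/4 ≤ ρ(x,p)²/2 + ρ(x,q)²/2` for all `x, p, q` — and `(M,μ)` is a
finite measure space, then `L²(M,F)` with `d₂(f,g) = (∫ ρ(f,g)² dμ)^{1/2}` satisfies the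
same CAT(0) comparison inequality:
`d₂(h, mid∘(f,g))² + d₂(f,g)²/4 ≤ d₂(h,f)²/2 + d₂(h,g)²/2` for all measurable `f, g, h`
of finite `L²` distance to a basepoint.  (In particular this applies to the space of
measurable maps into positive definite Hermitian matrices with finite `L²` distance to a
smooth reference Hermitian metric.) -/
theorem l2_maps_cat0
    {M F : Type*} [MeasurableSpace M] (μ : Measure M) [IsFiniteMeasure μ]
    [MetricSpace F] [CompleteSpace F] [MeasurableSpace F] [BorelSpace F]
    (a : F)
    (mid : F → F → F) (hmid_meas : Measurable (Function.uncurry mid))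
    (hCN : ∀ x p q : F,
      edist x (mid p q) ^ 2 + edist p q ^ 2 / 4 ≤
        edist x p ^ 2 / 2 + edist x q ^ 2 / 2)
    (f g h : M → F)
    (hf : Measurable f) (hg : Measurable g) (hh : Measurable h)
    (hfa : ∫⁻ x, edist (f x) a ^ 2 ∂μ < ⊤)
    (hga : ∫⁻ x, edist (g x) a ^ 2 ∂μ < ⊤)
    (hha : ∫⁻ x, edist (h x) a ^ 2 ∂μ < ⊤) :
    (∫⁻ x, edist (mid (f x) (g x)) a ^ 2 ∂μ < ⊤) ∧
      (∫⁻ x, edist (h x) (mid (f x) (g x)) ^ 2 ∂μ) +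
          (∫⁻ x, edist (f x) (g x) ^ 2 ∂μ) / 4 ≤
        (∫⁻ x, edist (h x) (f x) ^ 2 ∂μ) / 2 +
          (∫⁻ x, edist (h x) (g x) ^ 2 ∂μ) / 2 := by
  have hD := aux_dist mid hmid_meas (aux_mid mid hCN)
  have hE : ∀ u v : M → F, Measurable u → Measurable v →
      Measurable (fun x => edist (u x) (v x) ^ 2) := by
    intro u v hu hv
    have h1 : Measurable (fun x => dist (u x) (v x)) := hD.comp (hu.prodMk hv)
    have h2 : Measurable (fun x => edist (u x) (v x)) := by
      simp only [edist_dist]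
      exact h1.ennreal_ofReal
    exact h2.pow_const 2
  have hm : Measurable (fun x => mid (f x) (g x)) := hmid_meas.comp (hf.prodMk hg)
  have main : ∀ k : M → F, Measurable k →
      (∫⁻ x, edist (k x) (mid (f x) (g x)) ^ 2 ∂μ) +
          (∫⁻ x, edist (f x) (g x) ^ 2 ∂μ) / 4 ≤
        (∫⁻ x, edist (k x) (f x) ^ 2 ∂μ) / 2 +
          (∫⁻ x, edist (k x) (g x) ^ 2 ∂μ) / 2 := by
    intro k hk
    simp only [div_eq_mul_inv]
    rw [← lintegral_mul_const _ (hE f g hf hg), ← lintegral_mul_const _ (hE k f hk hf),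
      ← lintegral_mul_const _ (hE k g hk hg), ← lintegral_add_left (hE k _ hk hm),
      ← lintegral_add_left ((hE k f hk hf).mul_const _)]
    refine lintegral_mono fun x => ?_
    simpa only [div_eq_mul_inv] using hCN (k x) (f x) (g x)
  refine ⟨?_, main h hh⟩
  have h1 := main (fun _ => a) measurable_const
  simp only [edist_comm a] at h1
  refine lt_of_le_of_lt (le_self_add.trans h1) ?_
  exact ENNReal.add_lt_top.2 ⟨ENNReal.div_lt_top hfa.ne (by norm_num),
    ENNReal.div_lt_top hga.ne (by norm_num)⟩
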